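/- (Propagation of the Lohner derivative representation.) Let f : ℝ^n → ℝ^n be a C^∞ map with identically vanishing third derivative, and let ℋ = (H_1, …, H_n) with H_i = ∇²f_i the constant Hessians. Let x_0, b, r ∈ ℝ^n, let A, X_0, R be n×n real matrices, and let 𝒜 = (𝒜_1, …, 𝒜_n) be a sequence of n×n real matrices. Set x = x_0 + Ab + r and X = X_0 + b^T𝒜 + R. Then Df(x)·X = Df(x_0)X_0 + b^T( Df(x_0)∗𝒜 + A^Tℋ X_0 ) + r^Tℋ X_0 + Df(x_0) R + ((Ab + r)^Tℋ)(b^T𝒜 + R), where for a sequence of matrices 𝒜, b^T𝒜 is the matrix with m-th row b^T𝒜_m, B∗𝒜 = (Σ_i B_{1i}𝒜_i, …, Σ_i B_{ni}𝒜_i), A^Tℋ X_0 denotes the sequence (A^T H_m X_0)_m, and r^Tℋ X_0 = (r^Tℋ)X_0. -/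

import Mathlib

open Matrix

/-- For a vector `b` and a sequence `𝒜 = (𝒜_1, …, 𝒜_n)` of `n × n` matrices, `bTA b 𝒜` is
the `n × n` matrix whose `m`-th row is `bᵀ 𝒜_m`, i.e. `(bTA b 𝒜)_{mk} = Σ_j b_j (𝒜_m)_{jk}`. -/
def bTA {n : ℕ} (b : Fin n → ℝ) (A : Fin n → Matrix (Fin n) (Fin n) ℝ) :
    Matrix (Fin n) (Fin n) ℝ :=
  Matrix.of fun m k => ∑ j, b j * A m j k

/-- For a matrix `B` and a sequence `𝒜` of matrices, `B ∗ 𝒜` is the sequence with `m`-th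
entry `Σ_i B_{mi} 𝒜_i`. -/
def starA {n : ℕ} (B : Matrix (Fin n) (Fin n) ℝ) (A : Fin n → Matrix (Fin n) (Fin n) ℝ) :
    Fin n → Matrix (Fin n) (Fin n) ℝ :=
  fun m => ∑ i, B m i • A i

/-- The Jacobian matrix of `f : ℝⁿ → ℝⁿ` at a point. -/
noncomputable def jacobian {n : ℕ} (f : (Fin n → ℝ) → (Fin n → ℝ)) (z : Fin n → ℝ) :
    Matrix (Fin n) (Fin n) ℝ :=
  Matrix.of fun i j => fderiv ℝ f z (Pi.single j 1) i

/-!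
Since `D³f = 0`, the derivative is affine: `Df (x₀ + u) = Df x₀ + uᵀℋ`. With `u = Ab + r`, the
product `(Df x₀ + (Ab + r)ᵀℋ)(X₀ + bᵀ𝒜 + R)` expands by bilinearity, and its terms `Df x₀ (bᵀ𝒜)`
and `((Ab)ᵀℋ) X₀` are absorbed into the coefficient of `b` through `B (bᵀ𝒜) = bᵀ(B ∗ 𝒜)` and
`(Ab)ᵀℋ = bᵀ(Aᵀℋ)`.
-/

section AffineDerivative

variable {𝕜 E F : Type*} [NontriviallyNormedField 𝕜] [IsRCLikeNormedField 𝕜]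
  [NormedAddCommGroup E] [NormedSpace 𝕜 E] [NormedAddCommGroup F] [NormedSpace 𝕜 F] {f : E → F}

theorem map_add_of_hasFDerivAt_const {L : E →L[𝕜] F} (hf : ∀ x, HasFDerivAt f L x) (x u : E) :
    f (x + u) = f x + L u := by
  have hg (y : E) : HasFDerivAt (fun y ↦ f x + L (y - x)) L y :=
    (L.hasFDerivAt.comp y ((hasFDerivAt_id y).sub_const x)).const_add (f x)
  have h : f = fun y ↦ f x + L (y - x) :=
    eq_of_fderiv_eq (fun y ↦ (hf y).differentiableAt) (fun y ↦ (hg y).differentiableAt)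
      (fun y ↦ (hf y).fderiv.trans (hg y).fderiv.symm) x (by simp)
  simpa using congrFun h (x + u)

theorem map_add_of_iteratedFDeriv_two_eq_zero (hf : ContDiff 𝕜 2 f)
    (hf₂ : ∀ x, iteratedFDeriv 𝕜 2 f x = 0) (x u : E) : f (x + u) = f x + fderiv 𝕜 f x u := by
  have hf' : Differentiable 𝕜 (fderiv 𝕜 f) :=
    (hf.fderiv_right (m := 1) le_rfl).differentiable one_ne_zero
  have hf'' (y : E) : fderiv 𝕜 (fderiv 𝕜 f) y = 0 := by
    ext v w
    simpa [iteratedFDeriv_two_apply] using DFunLike.congr_fun (hf₂ y) ![v, w]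
  refine map_add_of_hasFDerivAt_const (fun y ↦ ?_) x u
  rw [is_const_of_fderiv_eq_zero hf' hf'' x y]
  exact (hf.differentiable two_ne_zero y).hasFDerivAt

theorem fderiv_add_of_iteratedFDeriv_three_eq_zero (hf : ContDiff 𝕜 3 f)
    (hf₃ : ∀ x, iteratedFDeriv 𝕜 3 f x = 0) (x u : E) :
    fderiv 𝕜 f (x + u) = fderiv 𝕜 f x + fderiv 𝕜 (fderiv 𝕜 f) x u := by
  refine map_add_of_iteratedFDeriv_two_eq_zero (hf.fderiv_right (by norm_num)) (fun y ↦ ?_) x u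
  rw [← norm_eq_zero, norm_iteratedFDeriv_fderiv, hf₃, norm_zero]

end AffineDerivative

section MatrixSequences

variable {n : ℕ}

theorem bTA_row (b : Fin n → ℝ) (𝒜 : Fin n → Matrix (Fin n) (Fin n) ℝ) (m : Fin n) :
    bTA b 𝒜 m = b ᵥ* 𝒜 m :=
  rfl

theorem bTA_add_left (u v : Fin n → ℝ) (𝒜 : Fin n → Matrix (Fin n) (Fin n) ℝ) :
    bTA (u + v) 𝒜 = bTA u 𝒜 + bTA v 𝒜 :=
  funext fun m ↦ add_vecMul (𝒜 m) u v

theorem bTA_add_right (b : Fin n → ℝ) (𝒜 ℬ : Fin n → Matrix (Fin n) (Fin n) ℝ) :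
    bTA b (fun m ↦ 𝒜 m + ℬ m) = bTA b 𝒜 + bTA b ℬ :=
  funext fun m ↦ vecMul_add (𝒜 m) (ℬ m) b

theorem bTA_mul_right (b : Fin n → ℝ) (𝒜 : Fin n → Matrix (Fin n) (Fin n) ℝ)
    (X : Matrix (Fin n) (Fin n) ℝ) : bTA b (fun m ↦ 𝒜 m * X) = bTA b 𝒜 * X := by
  funext m
  rw [mul_apply_eq_vecMul, bTA_row, bTA_row, vecMul_vecMul]

theorem bTA_transpose_mul (b : Fin n → ℝ) (A : Matrix (Fin n) (Fin n) ℝ)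
    (𝒜 : Fin n → Matrix (Fin n) (Fin n) ℝ) : bTA b (fun m ↦ Aᵀ * 𝒜 m) = bTA (A *ᵥ b) 𝒜 := by
  funext m
  rw [bTA_row, bTA_row, ← vecMul_vecMul, vecMul_transpose]

theorem bTA_starA (b : Fin n → ℝ) (B : Matrix (Fin n) (Fin n) ℝ)
    (𝒜 : Fin n → Matrix (Fin n) (Fin n) ℝ) : bTA b (starA B 𝒜) = B * bTA b 𝒜 := by
  funext m
  calc b ᵥ* ∑ i, B m i • 𝒜 i = ∑ i, B m i • (b ᵥ* 𝒜 i) := by simp only [vecMul_sum, vecMul_smul]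
    _ = (B * bTA b 𝒜) m := by simp only [mul_apply_eq_vecMul, vecMul_eq_sum, bTA_row]

end MatrixSequences

theorem jacobian_add_of_iteratedFDeriv_three_eq_zero {n : ℕ} {f : (Fin n → ℝ) → (Fin n → ℝ)}
    (hf : ContDiff ℝ 3 f) (hf₃ : ∀ x, iteratedFDeriv ℝ 3 f x = 0)
    {H : Fin n → Matrix (Fin n) (Fin n) ℝ} {x : Fin n → ℝ}
    (hH : ∀ (u v : Fin n → ℝ) (m : Fin n),
      iteratedFDeriv ℝ 2 f x ![u, v] m = u ⬝ᵥ (H m *ᵥ v))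
    (u : Fin n → ℝ) : jacobian f (x + u) = jacobian f x + bTA u H := by
  have hessian_entry (m k : Fin n) :
      fderiv ℝ (fderiv ℝ f) x u (Pi.single k 1) m = bTA u H m k := by
    have h := hH u (Pi.single k 1) m
    rwa [iteratedFDeriv_two_apply, mulVec_single_one] at h
  ext m k
  calc fderiv ℝ f (x + u) (Pi.single k 1) m
      = (fderiv ℝ f x + fderiv ℝ (fderiv ℝ f) x u) (Pi.single k 1) m := by
        rw [fderiv_add_of_iteratedFDeriv_three_eq_zero hf hf₃]
    _ = jacobian f x m k + bTA u H m k := congrArg (jacobian f x m k + ·) (hessian_entry m k)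

/-- Propagation of the Lohner derivative representation (equation (4.13) of
the paper).  For a quadratic map `f` with constant Hessians `ℋ = (H_1, …, H_n)`, with
`x = x₀ + Ab + r` and `X = X₀ + bᵀ𝒜 + R`,
`Df(x)·X = Df(x₀)X₀ + bᵀ(Df(x₀)∗𝒜 + Aᵀℋ X₀) + rᵀℋ X₀ + Df(x₀) R + ((Ab + r)ᵀℋ)(bᵀ𝒜 + R)`. -/
theorem lohner_derivative_propagation
    {n : ℕ} (f : (Fin n → ℝ) → (Fin n → ℝ))
    (hf : ContDiff ℝ (⊤ : ℕ∞) f)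
    (h3 : ∀ x, iteratedFDeriv ℝ 3 f x = 0)
    (H : Fin n → Matrix (Fin n) (Fin n) ℝ)
    (hH : ∀ (x u v : Fin n → ℝ) (m : Fin n),
      iteratedFDeriv ℝ 2 f x ![u, v] m = u ⬝ᵥ (H m *ᵥ v))
    (x0 b r : Fin n → ℝ) (A X0 R : Matrix (Fin n) (Fin n) ℝ)
    (𝒜 : Fin n → Matrix (Fin n) (Fin n) ℝ) :
    jacobian f (x0 + A *ᵥ b + r) * (X0 + bTA b 𝒜 + R) =
      jacobian f x0 * X0 +
      bTA b (fun m => starA (jacobian f x0) 𝒜 m + Aᵀ * H m * X0) +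
      bTA r H * X0 +
      jacobian f x0 * R +
      bTA (A *ᵥ b + r) H * (bTA b 𝒜 + R) := by
  have jacobian_eq :
      jacobian f (x0 + A *ᵥ b + r) = jacobian f x0 + bTA (A *ᵥ b + r) H := by
    rw [add_assoc]
    exact jacobian_add_of_iteratedFDeriv_three_eq_zero (contDiff_infty.mp hf 3) h3 (hH x0) _
  have linear_part :
      bTA b (fun m => starA (jacobian f x0) 𝒜 m + Aᵀ * H m * X0) =
        jacobian f x0 * bTA b 𝒜 + bTA (A *ᵥ b) H * X0 := by
    rw [bTA_add_right, bTA_starA, bTA_mul_right, bTA_transpose_mul]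
  rw [jacobian_eq, linear_part, bTA_add_left]
  noncomm_ring
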